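/- arXiv:math/0203097 — 2 statements merged into one kernel-verified Lean document; each statement's English description precedes it below -/
import Mathlib

section
/- For Lagrangian subspaces V and W of H, −(1/(πi))·Σ_{λ} log λ + dim(V ∩ W) = −(1/(πi))·Σ_{λ ≠ −1} log λ, where on the left the sum runs over all eigenvalues λ of −φ(V) ∘ φ(W)⁻¹ counted with multiplicity and on the right over those eigenvalues different from −1; i.e. adding dim(V ∩ W) to −(1/(πi)) times the trace of the logarithm of −φ(V) ∘ φ(W)⁻¹ exactly removes the contribution of the (−1)-eigenspace, so the two expressions defining m(V,W) agree. -/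
/-- The invariant `m(V,W)` of a pair of Lagrangian subspaces, defined (as in
Kirk–Lesch) by `m(V,W) = -(1/(πi)) Σ_{λ ≠ -1} log λ`, the sum running over the
eigenvalues `λ ≠ -1` (counted with algebraic multiplicity, i.e. over the roots of
the characteristic polynomial) of the unitary automorphism `-φ(V) ∘ φ(W)⁻¹` of `E₋`,
where `log` is the branch with argument in `(-π, π]` (this is `Complex.log`). -/
noncomputable def mInv {H : Type*} [NormedAddCommGroup H] [InnerProductSpace ℂ H]
    [FiniteDimensional ℂ H] {Ep Em : Submodule ℂ H}
    (φV φW : ↥Ep ≃ₗᵢ[ℂ] ↥Em) : ℂ :=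
  -(1 / ((Real.pi : ℂ) * Complex.I)) *
    (((LinearMap.charpoly
          (-((φW.symm.trans φV).toLinearEquiv.toLinearMap) : ↥Em →ₗ[ℂ] ↥Em)).roots.filter
        (fun l => l ≠ -1)).map Complex.log).sum

/-!
Since `E₊ ∩ E₋ = 0`, the vectors of `V ∩ W` are the `x + φ(V) x` with `φ(V) x = φ(W) x`, so `V ∩ W`
is isomorphic to the fixed space of `φ(V) ∘ φ(W)⁻¹`, which is the `(-1)`-eigenspace of
`-φ(V) ∘ φ(W)⁻¹`. Unitary operators are semisimple, because the orthogonal complement of an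
invariant subspace is invariant, so the dimension of this eigenspace is the multiplicity of `-1` in
the characteristic polynomial. As `log (-1) = πi`, each eigenvalue `-1` contributes `-1` to
`-(1/(πi)) Σ log λ`.
-/

open Module Module.End

theorem sum_map_eq_sum_map_filter_ne_add_count_nsmul {α M : Type*} [DecidableEq α]
    [AddCommMonoid M] (s : Multiset α) (a : α) (f : α → M) :
    (s.map f).sum = ((s.filter (fun b => b ≠ a)).map f).sum + s.count a • f a := by
  have hreplicate : s.filter (fun b => ¬b ≠ a) = Multiset.replicate (s.count a) a := by
    simp only [ne_eq, not_not, Multiset.filter_eq']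
  rw [← Multiset.sum_replicate, ← Multiset.map_replicate, ← hreplicate, ← Multiset.sum_add,
    ← Multiset.map_add, Multiset.filter_add_not]

theorem neg_one_div_pi_mul_I_mul_sum_log_add_count_neg_one (s : Multiset ℂ) :
    -(1 / ((Real.pi : ℂ) * Complex.I)) * (s.map Complex.log).sum + s.count (-1) =
      -(1 / ((Real.pi : ℂ) * Complex.I)) *
        ((s.filter (fun l => l ≠ -1)).map Complex.log).sum := by
  rw [sum_map_eq_sum_map_filter_ne_add_count_nsmul s (-1), Complex.log_neg_one, nsmul_eq_mul]
  field_simp [Complex.I_ne_zero, Real.pi_ne_zero]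
  ring

theorem graph_inf_graph {R M N : Type*} [Semiring R] [AddCommMonoid M] [Module R M]
    [AddCommMonoid N] [Module R N] (f g : M →ₗ[R] N) :
    f.graph ⊓ g.graph = (LinearMap.eqLocus f g).map (LinearMap.id.prod f) := by
  ext ⟨x, y⟩
  simp only [Submodule.mem_inf, LinearMap.mem_graph_iff, Submodule.mem_map,
    LinearMap.mem_eqLocus, LinearMap.prod_apply, Function.prod_apply, LinearMap.id_apply,
    Prod.mk.injEq]
  grind

theorem finrank_eqLocus_comp_symm_id {R M N : Type*} [Semiring R] [AddCommMonoid M] [Module R M]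
    [AddCommMonoid N] [Module R N] (f : M →ₗ[R] N) (e : M ≃ₗ[R] N) :
    finrank R (LinearMap.eqLocus (f ∘ₗ e.symm) LinearMap.id) =
      finrank R (LinearMap.eqLocus f e) := by
  have hmap : LinearMap.eqLocus (f ∘ₗ e.symm) LinearMap.id =
      (LinearMap.eqLocus f e).map (e : M →ₗ[R] N) := by
    ext y
    simp [Submodule.mem_map_equiv]
  rw [hmap, e.finrank_map_eq]

section InternalGraph

variable {R M : Type*} [Ring R] [AddCommGroup M] [Module R M] {p q : Submodule R M}

theorem injective_coprod_subtype_of_disjoint (hpq : Disjoint p q) :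
    Function.Injective (p.subtype.coprod q.subtype) := by
  rw [← LinearMap.ker_eq_bot, LinearMap.ker_coprod_of_disjoint_range _ _ (by simpa using hpq),
    p.ker_subtype, q.ker_subtype, Submodule.prod_bot]

/-- The graph of a linear map between two submodules of `M`, as the submodule
`{x + f x | x ∈ p}` of `M` rather than of `p × q`. Lagrangian subspaces are of this form, with `f`
their graph unitary. -/
def internalGraph (f : p →ₗ[R] q) : Submodule R M :=
  f.graph.map (p.subtype.coprod q.subtype)

theorem mem_internalGraph {f : p →ₗ[R] q} {v : M} :
    v ∈ internalGraph f ↔ ∃ x : p, v = (x : M) + (f x : M) := by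
  simp [internalGraph, LinearMap.mem_graph_iff, eq_comm]

theorem finrank_internalGraph_inf_internalGraph (hpq : Disjoint p q) (f g : p →ₗ[R] q) :
    finrank R ↥(internalGraph f ⊓ internalGraph g) = finrank R (LinearMap.eqLocus f g) := by
  have hcoprod := injective_coprod_subtype_of_disjoint hpq
  have hprod : Function.Injective (LinearMap.id.prod f) := fun x y h => congrArg Prod.fst h
  rw [internalGraph, internalGraph, ← Submodule.map_inf _ hcoprod, graph_inf_graph,
    ← (Submodule.equivMapOfInjective _ hcoprod _).finrank_eq,
    ← (Submodule.equivMapOfInjective _ hprod _).finrank_eq]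

end InternalGraph

theorem disjoint_ker_sub_smul_id_ker_add_smul_id {R M : Type*} [CommRing R] [IsDomain R]
    [AddCommGroup M] [Module R M] [IsTorsionFree R M] (f : M →ₗ[R] M) {μ : R} (hμ : μ ≠ -μ) :
    Disjoint (LinearMap.ker (f - μ • LinearMap.id)) (LinearMap.ker (f + μ • LinearMap.id)) := by
  simpa only [genEigenspace_one, neg_smul, sub_neg_eq_add, one_eq_id] using
    disjoint_genEigenspace f hμ 1 1

theorem count_roots_charpoly_eq_finrank_eigenspace {K V : Type*} [Field K] [DecidableEq K]
    [AddCommGroup V] [Module K V] [FiniteDimensional K V] {f : End K V}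
    (hf : f.IsFinitelySemisimple) (μ : K) :
    f.charpoly.roots.count μ = finrank K (f.eigenspace μ) := by
  rw [Polynomial.count_roots, ← LinearMap.finrank_maxGenEigenspace_eq,
    hf.maxGenEigenspace_eq_eigenspace]

theorem eigenspace_neg_neg_one {R M : Type*} [CommRing R] [AddCommGroup M] [Module R M]
    (f : End R M) : (-f).eigenspace (-1) = LinearMap.eqLocus f LinearMap.id := by
  ext x
  simp only [mem_eigenspace_iff, LinearMap.neg_apply, neg_smul, one_smul, neg_inj,
    LinearMap.mem_eqLocus, LinearMap.id_apply]

section Isometry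

variable {𝕜 E : Type*} [RCLike 𝕜] [NormedAddCommGroup E] [InnerProductSpace 𝕜 E]

theorem orthogonal_mem_invtSubmodule_of_isometry (U : E →ₗᵢ[𝕜] E) {q : Submodule 𝕜 E}
    [FiniteDimensional 𝕜 q] (hq : q ∈ invtSubmodule U.toLinearMap) :
    qᗮ ∈ invtSubmodule U.toLinearMap := by
  have hmap : q.map U.toLinearMap = q :=
    Submodule.eq_of_le_of_finrank_eq ((mem_invtSubmodule_iff_map_le _).mp hq)
      (Submodule.equivMapOfInjective _ U.injective q).finrank_eq.symm
  intro x hx z hz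
  obtain ⟨w, hw, rfl⟩ : z ∈ q.map U.toLinearMap := hmap.symm ▸ hz
  exact (U.inner_map_map w x).trans (hx w hw)

theorem isFinitelySemisimple_of_isometry (U : E →ₗᵢ[𝕜] E) :
    IsFinitelySemisimple U.toLinearMap := by
  refine isFinitelySemisimple_iff.mpr fun p hp _ q hq hqp => ?_
  have : FiniteDimensional 𝕜 q := Submodule.finiteDimensional_of_le hqp
  exact ⟨qᗮ ⊓ p, inf_le_right,
    invtSubmodule.inf_mem (orthogonal_mem_invtSubmodule_of_isometry U hq) hp,
    q.orthogonal_disjoint.mono_right inf_le_left,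
    Submodule.sup_orthogonal_inf_of_hasOrthogonalProjection hqp⟩

theorem count_neg_one_roots_charpoly_neg_symm_trans {F : Type*} [NormedAddCommGroup F]
    [InnerProductSpace 𝕜 F] [FiniteDimensional 𝕜 F] [DecidableEq 𝕜] (φ ψ : E ≃ₗᵢ[𝕜] F) :
    (LinearMap.charpoly (-(ψ.symm.trans φ).toLinearEquiv.toLinearMap)).roots.count (-1) =
      finrank 𝕜 (LinearMap.eqLocus φ.toLinearEquiv.toLinearMap ψ.toLinearEquiv.toLinearMap) := by
  have hsemisimple : IsFinitelySemisimple (-(ψ.symm.trans φ).toLinearEquiv.toLinearMap) :=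
    isFinitelySemisimple_of_isometry
      ((ψ.symm.trans φ).trans (LinearIsometryEquiv.neg 𝕜)).toLinearIsometry
  rw [count_roots_charpoly_eq_finrank_eigenspace hsemisimple, eigenspace_neg_neg_one]
  exact finrank_eqLocus_comp_symm_id φ.toLinearEquiv.toLinearMap ψ.toLinearEquiv

end Isometry

theorem stmt_5_general
    (H : Type*) [NormedAddCommGroup H] [InnerProductSpace ℂ H] [FiniteDimensional ℂ H]
    (Ep Em : Submodule ℂ H) (hdisj : Disjoint Ep Em) (V W : Submodule ℂ H)
    (φV φW : ↥Ep ≃ₗᵢ[ℂ] ↥Em)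
    (hφV : ∀ v : H, v ∈ V ↔ ∃ x : ↥Ep, v = (x : H) + ((φV x : ↥Em) : H))
    (hφW : ∀ v : H, v ∈ W ↔ ∃ x : ↥Ep, v = (x : H) + ((φW x : ↥Em) : H)) :
    -(1 / ((Real.pi : ℂ) * Complex.I)) *
        (((LinearMap.charpoly
            (-((φW.symm.trans φV).toLinearEquiv.toLinearMap) : ↥Em →ₗ[ℂ] ↥Em)).roots.map
          Complex.log).sum)
      + (Module.finrank ℂ ↥(V ⊓ W) : ℂ)
    = mInv φV φW := by
  have hV : V = internalGraph φV.toLinearEquiv.toLinearMap :=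
    Submodule.ext fun v => (hφV v).trans mem_internalGraph.symm
  have hW : W = internalGraph φW.toLinearEquiv.toLinearMap :=
    Submodule.ext fun v => (hφW v).trans mem_internalGraph.symm
  rw [hV, hW, finrank_internalGraph_inf_internalGraph hdisj,
    ← count_neg_one_roots_charpoly_neg_symm_trans φV φW]
  exact neg_one_div_pi_mul_I_mul_sum_log_add_count_neg_one _

/-- For Lagrangian subspaces `V`, `W` of `H`:
`-(1/(πi)) Σ_λ log λ + dim (V ∩ W) = -(1/(πi)) Σ_{λ ≠ -1} log λ`, where on the left
the sum runs over all eigenvalues of `-φ(V) ∘ φ(W)⁻¹` counted with multiplicity and on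
the right over those different from `-1`; i.e. the two expressions defining `m(V,W)` agree. -/
theorem stmt_5
    (H : Type*) [NormedAddCommGroup H] [InnerProductSpace ℂ H] [FiniteDimensional ℂ H]
    (γ : H →ₗ[ℂ] H)
    (hγ_unitary : ∀ x y : H, (inner ℂ (γ x) (γ y) : ℂ) = inner ℂ x y)
    (hγ_sq : ∀ x : H, γ (γ x) = -x)
    (Ep Em : Submodule ℂ H)
    (hEp : Ep = LinearMap.ker (γ - Complex.I • LinearMap.id))
    (hEm : Em = LinearMap.ker (γ + Complex.I • LinearMap.id))
    (V W : Submodule ℂ H) (hV : V.map γ = Vᗮ) (hW : W.map γ = Wᗮ)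
    (φV φW : ↥Ep ≃ₗᵢ[ℂ] ↥Em)
    (hφV : ∀ v : H, v ∈ V ↔ ∃ x : ↥Ep, v = (x : H) + ((φV x : ↥Em) : H))
    (hφW : ∀ v : H, v ∈ W ↔ ∃ x : ↥Ep, v = (x : H) + ((φW x : ↥Em) : H)) :
    -(1 / ((Real.pi : ℂ) * Complex.I)) *
        (((LinearMap.charpoly
            (-((φW.symm.trans φV).toLinearEquiv.toLinearMap) : ↥Em →ₗ[ℂ] ↥Em)).roots.map
          Complex.log).sum)
      + (Module.finrank ℂ ↥(V ⊓ W) : ℂ)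
    = mInv φV φW := by
  subst hEp hEm
  exact stmt_5_general H _ _
    (disjoint_ker_sub_smul_id_ker_add_smul_id γ (self_ne_neg.mpr Complex.I_ne_zero))
    V W φV φW hφV hφW
end

section
/- Let (a,b) and (A,B) be pairs of real numbers, each pair not both zero, let t > 0, and set V = span_ℂ{e₀, a·e₁ + b·e₂} and W = span_ℂ{e₀, A·e₁ + B·e₂} in H_t. Then the unitary automorphism φ(V) ∘ φ(W)⁻¹ of E₋ fixes e₀ + i·t·e₃ and multiplies e₁ + i·t·e₂ by ((ita + b)/(ita − b))·((itA − B)/(itA + B)). In particular, if B = 0 and a, b, A are all nonzero, then dim(V ∩ W) = 1 and m(V,W) = −1 + dim(V ∩ W) − (1/(πi))·log((b + ita)/(b − ita)) = −(1/(πi))·log((b + ita)/(b − ita)). -/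
/-!
Put `s = it`. In coordinates `E₊` and `E₋` are the planes of vectors `(p, q, ∓sq, ∓sp)`. The
identities `2e₀ = (e₀ - s e₃) + (e₀ + s e₃)` and
`2s(a e₁ + b e₂) = (sa - b)(e₁ - s e₂) + (sa + b)(e₁ + s e₂)` split the generators of `V` along
`E₊ ⊕ E₋`, so `φ(V)` is diagonal with entries `1` and `(sa + b)/(sa - b)`. Hence
`-φ(V) ∘ φ(W)⁻¹` has the eigenvalue `-1`, which comes from the line `ℂ e₀` in `V ∩ W` and does not
contribute to `m(V, W)`, and at most one further eigenvalue.
-/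

section GraphMap

variable {R M : Type*} [Ring R] [AddCommGroup M] [Module R M]

/-- `φ` maps `E` into `F` and `V` is its graph `{x + φ x : x ∈ E}`. For `E = E₊` and `F = E₋` this
says that `φ` is the graph unitary of the Lagrangian `V`. The map is defined on the whole module,
and its values outside `E` are irrelevant. -/
structure IsGraphMap (E F V : Submodule R M) (φ : M → M) : Prop where
  map_mem : ∀ x ∈ E, φ x ∈ F
  mem_iff : ∀ v, v ∈ V ↔ ∃ x ∈ E, v = x + φ x

theorem IsGraphMap.eq_of_add_mem {E F V : Submodule R M} {φ : M → M} (h : IsGraphMap E F V φ)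
    (hEF : Disjoint E F) {x y : M} (hx : x ∈ E) (hy : y ∈ F) (hxy : x + y ∈ V) : φ x = y := by
  obtain ⟨z, hz, hsum⟩ := (h.mem_iff _).1 hxy
  have hdiff : x - z = φ z - y := by rw [sub_eq_sub_iff_add_eq_add, hsum, add_comm]
  have hxz : x - z = 0 := Submodule.disjoint_def.1 hEF _ (sub_mem hx hz)
    (hdiff ▸ sub_mem (h.map_mem z hz) hy)
  rw [sub_eq_zero.1 hxz]
  exact sub_eq_zero.1 (hdiff.symm.trans hxz)

end GraphMap

section Planes

variable {K : Type*} [Field K]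

/-- The plane spanned by `e₀ + s e₃` and `e₁ + s e₂`. The eigenspaces `E₊` and `E₋` of `γ_t` are
the cases `s = -it` and `s = it`. -/
def eigenPlane (s : K) : Submodule K (Fin 4 → K) :=
  Submodule.span K {![1, 0, 0, s], ![0, 1, s, 0]}

/-- The plane spanned by `e₀` and `a e₁ + b e₂`; for real `(a, b) ≠ 0` it is a Lagrangian of
`H_t`. -/
def torusPlane (a b : K) : Submodule K (Fin 4 → K) :=
  Submodule.span K {![1, 0, 0, 0], ![0, a, b, 0]}

theorem mem_eigenPlane {s : K} {v : Fin 4 → K} :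
    v ∈ eigenPlane s ↔ v = ![v 0, v 1, s * v 1, s * v 0] := by
  rw [eigenPlane, Submodule.mem_span_pair]
  constructor
  · rintro ⟨p, q, rfl⟩
    simp [mul_comm]
  · intro hv
    refine ⟨v 0, v 1, ?_⟩
    rw [hv]
    simp [mul_comm]

theorem vec_mem_eigenPlane (s p q : K) : ![p, q, s * q, s * p] ∈ eigenPlane s :=
  mem_eigenPlane.2 rfl

theorem apply_eq_smul_iff_mem_eigenPlane {τ : K} (hτ : τ ≠ 0)
    {γ : (Fin 4 → K) → Fin 4 → K}
    (hγ : ∀ v, γ v = ![-(1 / τ) * v 3, -(1 / τ) * v 2, τ * v 1, τ * v 0])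
    {c : K} (hc : c * c = -1) {v : Fin 4 → K} : γ v = c • v ↔ v ∈ eigenPlane (-(c * τ)) := by
  rw [mem_eigenPlane, hγ]
  constructor
  · intro h
    have h₂ : τ * v 1 = c * v 2 := congrFun h 2
    have h₃ : τ * v 0 = c * v 3 := congrFun h 3
    funext i
    fin_cases i
    · rfl
    · rfl
    · change v 2 = -(c * τ) * v 1
      linear_combination c * h₂ + v 2 * hc
    · change v 3 = -(c * τ) * v 0
      linear_combination c * h₃ + v 3 * hc
  · intro h
    have h₂ : v 2 = -(c * τ) * v 1 := congrFun h 2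
    have h₃ : v 3 = -(c * τ) * v 0 := congrFun h 3
    funext i
    fin_cases i
    · change -(1 / τ) * v 3 = c * v 0
      rw [h₃]
      field_simp
    · change -(1 / τ) * v 2 = c * v 1
      rw [h₂]
      field_simp
    · change τ * v 1 = c * v 2
      linear_combination -c * h₂ + τ * v 1 * hc
    · change τ * v 0 = c * v 3
      linear_combination -c * h₃ + τ * v 0 * hc

theorem mem_torusPlane {a b : K} {v : Fin 4 → K} :
    v ∈ torusPlane a b ↔ ∃ c d, v = ![c, d * a, d * b, 0] := by
  simp [torusPlane, Submodule.mem_span_pair, eq_comm]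

theorem torusPlane_inf_torusPlane {a b A B : K} (h : a * B ≠ b * A) :
    torusPlane a b ⊓ torusPlane A B = Submodule.span K {![1, 0, 0, 0]} := by
  ext v
  simp only [Submodule.mem_inf, mem_torusPlane, Submodule.mem_span_singleton]
  constructor
  · rintro ⟨⟨c, d, rfl⟩, c', d', hv⟩
    obtain ⟨-, h₁, h₂⟩ : c = c' ∧ d * a = d' * A ∧ d * b = d' * B := by simpa using hv
    have hdet : d * (a * B - b * A) = 0 := by linear_combination B * h₁ - A * h₂
    have hd : d = 0 := (mul_eq_zero.1 hdet).resolve_right (sub_ne_zero.2 h)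
    exact ⟨c, by simp [hd]⟩
  · rintro ⟨c, rfl⟩
    exact ⟨⟨c, 0, by simp⟩, c, 0, by simp⟩

theorem finrank_torusPlane_inf_torusPlane {a b A B : K} (h : a * B ≠ b * A) :
    Module.finrank K ↥(torusPlane a b ⊓ torusPlane A B) = 1 := by
  rw [torusPlane_inf_torusPlane h]
  exact finrank_span_singleton (Function.ne_iff.2 ⟨0, by simp⟩)

variable [NeZero (2 : K)] {s : K}

theorem disjoint_eigenPlane_neg (hs : s ≠ 0) : Disjoint (eigenPlane (-s)) (eigenPlane s) := by
  refine Submodule.disjoint_def.2 fun v hneg hpos ↦ ?_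
  rw [mem_eigenPlane] at hneg hpos
  have h2s : 2 * s ≠ 0 := mul_ne_zero two_ne_zero hs
  obtain ⟨h₁, h₀⟩ : -(s * v 1) = s * v 1 ∧ -(s * v 0) = s * v 0 := by
    simpa using hneg.symm.trans hpos
  have hv₀ : v 0 = 0 := (mul_eq_zero.1 (by linear_combination -h₀)).resolve_left h2s
  have hv₁ : v 1 = 0 := (mul_eq_zero.1 (by linear_combination -h₁)).resolve_left h2s
  rw [hpos, hv₀, hv₁]
  simp

namespace IsGraphMap

variable {a b A B : K} {φ φV φW : (Fin 4 → K) → Fin 4 → K}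

theorem mul_sub_ne_zero (hs : s ≠ 0)
    (h : IsGraphMap (eigenPlane (-s)) (eigenPlane s) (torusPlane a b) φ) : s * a - b ≠ 0 := by
  have hx := vec_mem_eigenPlane (-s) 0 1
  obtain ⟨c, d, hv⟩ := mem_torusPlane.1 ((h.mem_iff _).2 ⟨_, hx, rfl⟩)
  rw [mem_eigenPlane.1 (h.map_mem _ hx)] at hv
  generalize φ ![0, 1, -s * 1, -s * 0] = y at hv
  obtain ⟨-, h₁, h₂, -⟩ : y 0 = c ∧ 1 + y 1 = d * a ∧ -s + s * y 1 = d * b ∧ _ := by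
    simpa using hv
  have hd : d * (s * a - b) = 2 * s := by linear_combination h₂ - s * h₁
  exact right_ne_zero_of_mul (hd ▸ mul_ne_zero two_ne_zero hs)

theorem apply_vec (hs : s ≠ 0)
    (h : IsGraphMap (eigenPlane (-s)) (eigenPlane s) (torusPlane a b) φ) (p q : K) :
    φ ![p, q, -s * q, -s * p] =
      ![p, (s * a + b) / (s * a - b) * q, s * ((s * a + b) / (s * a - b) * q), s * p] := by
  have hab := h.mul_sub_ne_zero hs
  refine h.eq_of_add_mem (disjoint_eigenPlane_neg hs) (vec_mem_eigenPlane _ _ _)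
    (vec_mem_eigenPlane _ _ _) (mem_torusPlane.2 ⟨p + p, 2 * s * q / (s * a - b), ?_⟩)
  have h₁ : q + (s * a + b) / (s * a - b) * q = 2 * s * q / (s * a - b) * a := by
    field_simp
    ring
  have h₂ : -(s * q) + s * ((s * a + b) / (s * a - b) * q) = 2 * s * q / (s * a - b) * b := by
    field_simp
    ring
  simpa using ⟨h₁, h₂⟩

theorem exists_apply_eq_apply (hs : s ≠ 0)
    (hV : IsGraphMap (eigenPlane (-s)) (eigenPlane s) (torusPlane a b) φV)
    (hW : IsGraphMap (eigenPlane (-s)) (eigenPlane s) (torusPlane A B) φW) :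
    ∃ x ∈ eigenPlane (-s), φW x = ![1, 0, 0, s] ∧ φV x = ![1, 0, 0, s] := by
  refine ⟨_, vec_mem_eigenPlane (-s) 1 0, ?_⟩
  rw [hW.apply_vec hs, hV.apply_vec hs]
  simp

theorem exists_apply_eq_smul_apply (hs : s ≠ 0)
    (hV : IsGraphMap (eigenPlane (-s)) (eigenPlane s) (torusPlane a b) φV)
    (hW : IsGraphMap (eigenPlane (-s)) (eigenPlane s) (torusPlane A B) φW)
    (hAB : s * A + B ≠ 0) :
    ∃ x ∈ eigenPlane (-s), φW x = ![0, 1, s, 0] ∧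
      φV x = ((s * a + b) / (s * a - b) * ((s * A - B) / (s * A + B))) • ![0, 1, s, 0] := by
  have hinv : (s * A + B) / (s * A - B) * ((s * A - B) / (s * A + B)) = 1 := by
    rw [div_mul_div_cancel₀ (hW.mul_sub_ne_zero hs), div_self hAB]
  refine ⟨_, vec_mem_eigenPlane (-s) 0 ((s * A - B) / (s * A + B)), ?_⟩
  rw [hW.apply_vec hs, hV.apply_vec hs, hinv]
  simp [mul_comm]

theorem eigenvalue_eq (hs : s ≠ 0)
    (hV : IsGraphMap (eigenPlane (-s)) (eigenPlane s) (torusPlane a b) φV)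
    (hW : IsGraphMap (eigenPlane (-s)) (eigenPlane s) (torusPlane A B) φW)
    (hAB : s * A + B ≠ 0) {x : Fin 4 → K} (hx : x ∈ eigenPlane (-s)) (hx₀ : x ≠ 0)
    {l : K} (hl : l ≠ -1) (hlx : -φV x = l • φW x) :
    l = (b + s * a) / (b - s * a) * ((s * A - B) / (s * A + B)) := by
  have hAB' := hW.mul_sub_ne_zero hs
  rw [mem_eigenPlane] at hx
  generalize x 0 = p, x 1 = q at hx
  subst hx
  rw [hV.apply_vec hs, hW.apply_vec hs] at hlx
  have hp : -p = l * p := by simpa using congrFun hlx 0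
  have hq : -((s * a + b) / (s * a - b) * q) = l * ((s * A + B) / (s * A - B) * q) := by
    simpa using congrFun hlx 1
  have hp₀ : p = 0 := by
    have : (l + 1) * p = 0 := by linear_combination -hp
    exact (mul_eq_zero.1 this).resolve_left fun h ↦ hl (eq_neg_of_add_eq_zero_left h)
  have hq₀ : q ≠ 0 := fun hq₀ ↦ hx₀ (by simp [hp₀, hq₀])
  have hquot : l * ((s * A + B) / (s * A - B)) = -((s * a + b) / (s * a - b)) :=
    mul_right_cancel₀ hq₀ (by linear_combination -hq)
  calc l = l * ((s * A + B) / (s * A - B)) * ((s * A - B) / (s * A + B)) := by field_simp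
    _ = (b + s * a) / (b - s * a) * ((s * A - B) / (s * A + B)) := by
      rw [hquot, ← div_neg, neg_sub, add_comm b]

end IsGraphMap

end Planes

section TorusModel

open Complex

variable {τ : ℂ} {γ : (Fin 4 → ℂ) → Fin 4 → ℂ}

theorem apply_eq_I_smul_iff (hτ : τ ≠ 0)
    (hγ : ∀ v, γ v = ![-(1 / τ) * v 3, -(1 / τ) * v 2, τ * v 1, τ * v 0]) {v : Fin 4 → ℂ} :
    γ v = I • v ↔ v ∈ eigenPlane (-(I * τ)) :=
  apply_eq_smul_iff_mem_eigenPlane hτ hγ I_mul_I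

theorem apply_eq_neg_I_smul_iff (hτ : τ ≠ 0)
    (hγ : ∀ v, γ v = ![-(1 / τ) * v 3, -(1 / τ) * v 2, τ * v 1, τ * v 0]) {v : Fin 4 → ℂ} :
    γ v = -(I • v) ↔ v ∈ eigenPlane (I * τ) := by
  rw [← neg_smul, apply_eq_smul_iff_mem_eigenPlane hτ hγ (by simp), neg_mul, neg_neg]

theorem isGraphMap_eigenPlane (hτ : τ ≠ 0)
    (hγ : ∀ v, γ v = ![-(1 / τ) * v 3, -(1 / τ) * v 2, τ * v 1, τ * v 0])
    {V : Submodule ℂ (Fin 4 → ℂ)} {φ : (Fin 4 → ℂ) → Fin 4 → ℂ}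
    (hmem : ∀ x, γ x = I • x → γ (φ x) = -(I • φ x))
    (hgraph : ∀ v, v ∈ V ↔ ∃ x, γ x = I • x ∧ v = x + φ x) :
    IsGraphMap (eigenPlane (-(I * τ))) (eigenPlane (I * τ)) V φ := by
  simp only [apply_eq_I_smul_iff hτ hγ, apply_eq_neg_I_smul_iff hτ hγ] at hmem hgraph
  exact ⟨hmem, hgraph⟩

theorem I_mul_ofReal_mul_add_ofReal_ne_zero {t a b : ℝ} (ht : t ≠ 0) (hab : ¬(a = 0 ∧ b = 0)) :
    I * t * a + b ≠ 0 := by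
  intro h
  have hre : b = 0 := by simpa using congrArg re h
  have him : t = 0 ∨ a = 0 := by simpa using congrArg im h
  exact hab ⟨him.resolve_left ht, hre⟩

theorem stmt_16_general {a b A B : ℂ} (hτ : τ ≠ 0) (hAB : I * τ * A + B ≠ 0)
    (hγ : ∀ v, γ v = ![-(1 / τ) * v 3, -(1 / τ) * v 2, τ * v 1, τ * v 0])
    {V W : Submodule ℂ (Fin 4 → ℂ)} (hV : V = torusPlane a b) (hW : W = torusPlane A B)
    {φV φW : (Fin 4 → ℂ) → Fin 4 → ℂ}
    (hφVmem : ∀ x, γ x = I • x → γ (φV x) = -(I • φV x))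
    (hφVgraph : ∀ v, v ∈ V ↔ ∃ x, γ x = I • x ∧ v = x + φV x)
    (hφWmem : ∀ x, γ x = I • x → γ (φW x) = -(I • φW x))
    (hφWgraph : ∀ v, v ∈ W ↔ ∃ x, γ x = I • x ∧ v = x + φW x) :
    (∃ x, γ x = I • x ∧ φW x = ![1, 0, 0, I * τ] ∧ φV x = ![1, 0, 0, I * τ]) ∧
    (∃ x, γ x = I • x ∧ φW x = ![0, 1, I * τ, 0] ∧
      φV x = ((I * τ * a + b) / (I * τ * a - b) * ((I * τ * A - B) / (I * τ * A + B))) •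
        ![0, 1, I * τ, 0]) ∧
    (a * B ≠ b * A →
      Module.finrank ℂ ↥(V ⊓ W) = 1 ∧
      ∀ l : ℂ, l ≠ -1 → (∃ x, γ x = I • x ∧ x ≠ 0 ∧ -(φV x) = l • φW x) →
        -(1 / (Real.pi * I)) * log l =
            -1 + (Module.finrank ℂ ↥(V ⊓ W) : ℂ) - (1 / (Real.pi * I)) *
              log ((b + I * τ * a) / (b - I * τ * a) * ((I * τ * A - B) / (I * τ * A + B))) ∧
          -(1 / (Real.pi * I)) * log l =
            -(1 / (Real.pi * I)) *
              log ((b + I * τ * a) / (b - I * τ * a) * ((I * τ * A - B) / (I * τ * A + B)))) := by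
  subst hV hW
  have hs : I * τ ≠ 0 := mul_ne_zero I_ne_zero hτ
  have hV := isGraphMap_eigenPlane hτ hγ hφVmem hφVgraph
  have hW := isGraphMap_eigenPlane hτ hγ hφWmem hφWgraph
  simp only [apply_eq_I_smul_iff hτ hγ]
  refine ⟨hV.exists_apply_eq_apply hs hW, hV.exists_apply_eq_smul_apply hs hW hAB,
    fun h ↦ ?_⟩
  have hrank := finrank_torusPlane_inf_torusPlane h
  refine ⟨hrank, fun l hl ⟨x, hx, hx₀, hlx⟩ ↦ ?_⟩
  rw [hrank, hV.eigenvalue_eq hs hW hAB hx hx₀ hl hlx]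
  exact ⟨by push_cast; ring, rfl⟩

end TorusModel


/-- In the torus model `H_t` let `V = span_ℂ {e₀, a e₁ + b e₂}` and
`W = span_ℂ {e₀, A e₁ + B e₂}` (each pair `(a,b)`, `(A,B)` not both zero, `t > 0`), with
graph unitaries `φV, φW : E₊ → E₋`.  Then the unitary automorphism `φ(V) ∘ φ(W)⁻¹` of
`E₋` fixes `e₀ + i t e₃` and multiplies `e₁ + i t e₂` by
`((ita + b)/(ita − b))·((itA − B)/(itA + B))`.  In particular, if `B = 0` and `a, b, A`
are all nonzero, then `dim (V ∩ W) = 1` and, for the eigenvalue `l ≠ -1` of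
`-φ(V) ∘ φ(W)⁻¹` (so that `m(V,W) = -(1/(πi)) log l`),
`m(V,W) = -1 + dim(V ∩ W) - (1/(πi)) log((b + ita)/(b − ita))
        = -(1/(πi)) log((b + ita)/(b − ita))`. -/
theorem stmt_16
    (t : ℝ) (ht : 0 < t)
    (a b A B : ℝ) (hab : ¬(a = 0 ∧ b = 0)) (hAB : ¬(A = 0 ∧ B = 0))
    (γ : (Fin 4 → ℂ) →ₗ[ℂ] (Fin 4 → ℂ))
    (hγ : ∀ v : Fin 4 → ℂ,
      γ v = ![-(1 / (t : ℂ)) * v 3, -(1 / (t : ℂ)) * v 2, (t : ℂ) * v 1, (t : ℂ) * v 0])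
    (ip : (Fin 4 → ℂ) → (Fin 4 → ℂ) → ℂ)
    (hip : ∀ x y : Fin 4 → ℂ,
      ip x y =
        ((4 * Real.pi ^ 2 * t : ℝ) : ℂ) *
            ((starRingEnd ℂ) (x 0) * y 0 + (starRingEnd ℂ) (x 1) * y 1) +
          ((4 * Real.pi ^ 2 / t : ℝ) : ℂ) *
            ((starRingEnd ℂ) (x 2) * y 2 + (starRingEnd ℂ) (x 3) * y 3))
    (V W : Submodule ℂ (Fin 4 → ℂ))
    (hV : V = Submodule.span ℂ {![1, 0, 0, 0], ![0, (a : ℂ), (b : ℂ), 0]})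
    (hW : W = Submodule.span ℂ {![1, 0, 0, 0], ![0, (A : ℂ), (B : ℂ), 0]})
    (φV φW : (Fin 4 → ℂ) → (Fin 4 → ℂ))
    (hφVmem : ∀ x : Fin 4 → ℂ, γ x = Complex.I • x → γ (φV x) = -(Complex.I • φV x))
    (hφVgraph : ∀ v : Fin 4 → ℂ,
      v ∈ V ↔ ∃ x : Fin 4 → ℂ, γ x = Complex.I • x ∧ v = x + φV x)
    (hφWmem : ∀ x : Fin 4 → ℂ, γ x = Complex.I • x → γ (φW x) = -(Complex.I • φW x))
    (hφWgraph : ∀ v : Fin 4 → ℂ,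
      v ∈ W ↔ ∃ x : Fin 4 → ℂ, γ x = Complex.I • x ∧ v = x + φW x) :
    -- `φ(V) ∘ φ(W)⁻¹` fixes `e₀ + i t e₃` ...
    (∃ x : Fin 4 → ℂ, γ x = Complex.I • x ∧
        φW x = ![1, 0, 0, Complex.I * (t : ℂ)] ∧
        φV x = ![1, 0, 0, Complex.I * (t : ℂ)]) ∧
    -- ... and multiplies `e₁ + i t e₂` by `((ita+b)/(ita−b))·((itA−B)/(itA+B))`
    (∃ x : Fin 4 → ℂ, γ x = Complex.I • x ∧
        φW x = ![0, 1, Complex.I * (t : ℂ), 0] ∧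
        φV x =
          (((Complex.I * (t : ℂ) * (a : ℂ) + (b : ℂ)) /
              (Complex.I * (t : ℂ) * (a : ℂ) - (b : ℂ))) *
            ((Complex.I * (t : ℂ) * (A : ℂ) - (B : ℂ)) /
              (Complex.I * (t : ℂ) * (A : ℂ) + (B : ℂ)))) •
            ![0, 1, Complex.I * (t : ℂ), 0]) ∧
    -- the `B = 0` case
    (B = 0 → a ≠ 0 → b ≠ 0 → A ≠ 0 →
      Module.finrank ℂ ↥(V ⊓ W) = 1 ∧
      ∀ l : ℂ, l ≠ -1 →
        -- `l` is an eigenvalue of `-φ(V) ∘ φ(W)⁻¹`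
        (∃ x : Fin 4 → ℂ, γ x = Complex.I • x ∧ x ≠ 0 ∧ -(φV x) = l • φW x) →
        (-(1 / ((Real.pi : ℂ) * Complex.I)) * Complex.log l =
            -1 + (Module.finrank ℂ ↥(V ⊓ W) : ℂ) -
              (1 / ((Real.pi : ℂ) * Complex.I)) *
                Complex.log
                  (((b : ℂ) + Complex.I * (t : ℂ) * (a : ℂ)) /
                    ((b : ℂ) - Complex.I * (t : ℂ) * (a : ℂ))) ∧
          -(1 / ((Real.pi : ℂ) * Complex.I)) * Complex.log l =
            -(1 / ((Real.pi : ℂ) * Complex.I)) *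
              Complex.log
                (((b : ℂ) + Complex.I * (t : ℂ) * (a : ℂ)) /
                  ((b : ℂ) - Complex.I * (t : ℂ) * (a : ℂ))))) := by
  obtain ⟨hfix, hmul, hm⟩ := stmt_16_general (Complex.ofReal_ne_zero.2 ht.ne')
    (I_mul_ofReal_mul_add_ofReal_ne_zero ht.ne' hAB) hγ hV hW hφVmem hφVgraph hφWmem hφWgraph
  exact ⟨hfix, hmul, by rintro rfl - hb hA; simpa [ht.ne', hb, hA] using hm⟩
end
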